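/- Let V be an n-dimensional real inner product space (n ≥ 2), W a real inner product space, ζ : V × V → W a symmetric bilinear map, and T the tensor defined by the algebraic Gauss equation. Let r > 0 with r ≠ n(n−1) and a(r) = (n−1)(n+r)(n²−n−r)/(nr). Fix an orthonormal basis (e_1,…,e_n) of V with ζ_{ij} = ζ(e_i,e_j), and let Π_{n−1} be the hyperplane spanned by e_1,…,e_{n−1}. Then equality 2τ_T = r·C^{T,ζ} + a(r)·C^{T,ζ}(Π_{n−1}) holds if and only if ζ_{ij} = 0 for all i ≠ j, i,j ∈ {1,…,n}, and ζ_{11} = ζ_{22} = ⋯ = ζ_{n−1,n−1} = (r/(n(n−1))) ζ_{nn}. -/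

import Mathlib

open RealInnerProductSpace

/-!
By the Gauss equation, twice the scalar curvature is `‖∑ ζᵢᵢ‖² - ∑ ‖ζᵢⱼ‖²`. Hence the gap between
the two sides of the equality is a quadratic form in the `ζᵢⱼ` whose off-diagonal part is a sum of
squares with positive coefficients. Completing the square in `ζₙₙ` turns the diagonal part into
`α ∑ ‖dᵢ‖² - ‖∑ dᵢ‖²`, summed over `i < n` with `dᵢ = ζᵢᵢ - (r / (n (n - 1))) ζₙₙ`. By
Cauchy–Schwarz this form is positive definite, because `α = (n - 1) (n + r) / r` exceeds the number
`n - 1` of its variables.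
-/

open Finset

lemma cast_card_compl_singleton {ι R : Type*} [Fintype ι] [DecidableEq ι] [AddGroupWithOne R]
    (k : ι) : (#({k}ᶜ : Finset ι) : R) = Fintype.card ι - 1 := by
  rw [Finset.card_compl, card_singleton, Nat.cast_pred (Fintype.card_pos_iff.mpr ⟨k⟩)]

lemma fin_val_lt_sub_one_iff_ne {n : ℕ} (hn : n - 1 < n) (i : Fin n) :
    (i : ℕ) < n - 1 ↔ i ≠ ⟨n - 1, hn⟩ := by
  rw [Ne, Fin.ext_iff]
  lia

section SymmetricArrays

variable {ι M : Type*}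

lemma sum_sum_eq_sum_diag_add_sum_offDiag [AddCommMonoid M] (s : Finset ι) (f : ι → ι → M) :
    ∑ i ∈ s, ∑ j ∈ s, f i j = ∑ i ∈ s, f i i + ∑ p ∈ s.offDiag, f p.1 p.2 := by
  classical
  rw [← sum_product', ← diag_union_offDiag, sum_union (disjoint_diag_offDiag s), sum_diag]

lemma sum_sum_eq_sum_sum_compl_add_of_symm [Fintype ι] [DecidableEq ι] [AddCommMonoid M]
    {f : ι → ι → M} (hf : ∀ i j, f i j = f j i) (k : ι) :
    ∑ i, ∑ j, f i j =
      ∑ i ∈ {k}ᶜ, ∑ j ∈ {k}ᶜ, f i j + 2 • ∑ i ∈ {k}ᶜ, f i k + f k k := by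
  simp only [Fintype.sum_eq_add_sum_compl k, sum_add_distrib, hf k, two_nsmul]
  abel

lemma two_nsmul_sum_sum_lt_of_symm [Fintype ι] [LinearOrder ι] [AddCommMonoid M]
    {f : ι → ι → M} (hf : ∀ i j, f i j = f j i) (hf₀ : ∀ i, f i i = 0) :
    2 • ∑ i, ∑ j with i < j, f i j = ∑ i, ∑ j, f i j := by
  have lower_eq_upper : ∑ i, ∑ j with j < i, f i j = ∑ i, ∑ j with i < j, f i j := by
    simp only [sum_filter]
    rw [sum_comm]
    simp only [hf]
  rw [two_nsmul]
  nth_rewrite 1 [← lower_eq_upper]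
  simp only [← sum_add_distrib, sum_filter]
  refine sum_congr rfl fun i _ ↦ sum_congr rfl fun j _ ↦ ?_
  rcases lt_trichotomy i j with hij | rfl | hij
  · simp [hij, hij.not_gt]
  · simp [hf₀]
  · simp [hij, hij.not_gt]

lemma offDiag_compl_singleton_eq_zero_iff_of_symm [Fintype ι] [DecidableEq ι] [Zero M]
    {f : ι → ι → M} (hf : ∀ i j, f i j = f j i) (k : ι) :
    ((∀ p ∈ ({k}ᶜ : Finset ι).offDiag, f p.1 p.2 = 0) ∧ ∀ i ∈ ({k}ᶜ : Finset ι), f i k = 0) ↔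
      ∀ i j, i ≠ j → f i j = 0 := by
  simp only [mem_offDiag, mem_compl, mem_singleton, Prod.forall]
  refine ⟨fun ⟨block, column⟩ i j hij ↦ ?_, fun off ↦ ⟨fun i j hij ↦ off i j hij.2.2, (off · k)⟩⟩
  by_cases hj : j = k
  · exact hj ▸ column i (hj ▸ hij)
  by_cases hi : i = k
  · rw [hf, hi]
    exact column j hj
  · exact block i j ⟨hi, hj, hij⟩

end SymmetricArrays

section QuadraticForm

variable {ι W : Type*} [NormedAddCommGroup W]

lemma sq_norm_sum_le_card_mul_sum_sq_norm (s : Finset ι) (v : ι → W) :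
    ‖∑ i ∈ s, v i‖ ^ 2 ≤ #s * ∑ i ∈ s, ‖v i‖ ^ 2 :=
  (pow_le_pow_left₀ (norm_nonneg _) (norm_sum_le s v) 2).trans sq_sum_le_card_mul_sum_sq

lemma sq_norm_sum_le_mul_sum_sq_norm {s : Finset ι} {α : ℝ} (hα : #s ≤ α) (v : ι → W) :
    ‖∑ i ∈ s, v i‖ ^ 2 ≤ α * ∑ i ∈ s, ‖v i‖ ^ 2 :=
  (sq_norm_sum_le_card_mul_sum_sq_norm s v).trans (by gcongr)

lemma sum_sq_norm_eq_zero_iff {s : Finset ι} {v : ι → W} :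
    ∑ i ∈ s, ‖v i‖ ^ 2 = 0 ↔ ∀ i ∈ s, v i = 0 := by
  simp [sum_eq_zero_iff_of_nonneg]

lemma mul_sum_sq_norm_sub_sq_norm_sum_eq_zero_iff {s : Finset ι} {α : ℝ} (hα : #s < α)
    {v : ι → W} :
    α * ∑ i ∈ s, ‖v i‖ ^ 2 - ‖∑ i ∈ s, v i‖ ^ 2 = 0 ↔ ∀ i ∈ s, v i = 0 := by
  refine ⟨fun h ↦ sum_sq_norm_eq_zero_iff.mp ?_, fun h ↦ ?_⟩
  · have cauchy_schwarz := sq_norm_sum_le_card_mul_sum_sq_norm s v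
    have excess_nonpos : (α - #s) * ∑ i ∈ s, ‖v i‖ ^ 2 ≤ 0 := by linarith
    exact le_antisymm (nonpos_of_mul_nonpos_right excess_nonpos (sub_pos.mpr hα)) (by positivity)
  · rw [sum_sq_norm_eq_zero_iff.mpr h, sum_eq_zero h]
    simp

lemma mul_sum_sq_norm_sub_sq_norm_sum_add [InnerProductSpace ℝ W] (s : Finset ι) {α c : ℝ}
    (hc : c * (α - #s) = 1) (x : ι → W) (y : W) :
    α * ∑ i ∈ s, ‖x i‖ ^ 2 + (1 + #s * c) * ‖y‖ ^ 2 - ‖∑ i ∈ s, x i + y‖ ^ 2 =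
      α * ∑ i ∈ s, ‖x i - c • y‖ ^ 2 - ‖∑ i ∈ s, (x i - c • y)‖ ^ 2 := by
  have norm_sub (v : W) (t : ℝ) : ‖v - t • y‖ ^ 2 = ‖v‖ ^ 2 - 2 * t * ⟪v, y⟫ + t ^ 2 * ‖y‖ ^ 2 := by
    rw [norm_sub_sq_real, inner_smul_right, norm_smul, mul_pow, Real.norm_eq_abs, sq_abs]
    ring
  have sum_norm_sub : ∑ i ∈ s, ‖x i - c • y‖ ^ 2 =
      ∑ i ∈ s, ‖x i‖ ^ 2 - 2 * c * ⟪∑ i ∈ s, x i, y⟫ + #s * c ^ 2 * ‖y‖ ^ 2 := by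
    simp only [norm_sub, sum_add_distrib, sum_sub_distrib, ← mul_sum, sum_inner, sum_const,
      nsmul_eq_mul]
    ring
  have sum_sub : ∑ i ∈ s, (x i - c • y) = ∑ i ∈ s, x i - (#s * c) • y := by
    rw [sum_sub_distrib, sum_const, ← Nat.cast_smul_eq_nsmul ℝ, smul_smul]
  rw [sum_norm_sub, sum_sub, norm_sub, norm_add_sq_real]
  linear_combination (2 * ⟪∑ i ∈ s, x i, y⟫ - #s * c * ‖y‖ ^ 2) * hc

end QuadraticForm

section Casorati

variable {ι W : Type*} [NormedAddCommGroup W]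

/-- The algebraic Casorati curvature of the span of the basis vectors indexed by `s`, for a bilinear
map with components `h i j = ζ(eᵢ, eⱼ)`. -/
noncomputable def casoratiCurvature (h : ι → ι → W) (s : Finset ι) : ℝ :=
  (1 / #s) * ∑ i ∈ s, ∑ j ∈ s, ‖h i j‖ ^ 2

/-- The coefficient `a(r)` of the Casorati curvature of a hyperplane in dimension `n`. -/
noncomputable def casoratiCoeff (n r : ℝ) : ℝ :=
  (n - 1) * (n + r) * (n ^ 2 - n - r) / (n * r)

variable [InnerProductSpace ℝ W] [Fintype ι]

/-- The scalar curvature of the tensor given by the Gauss equation for a bilinear map with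
components `h i j = ζ(eᵢ, eⱼ)`: the sum over `i < j` of the components `T(eᵢ, eⱼ, eⱼ, eᵢ)`. -/
noncomputable def gaussScalarCurvature [LinearOrder ι] (h : ι → ι → W) : ℝ :=
  ∑ i, ∑ j with i < j, (⟪h i i, h j j⟫ - ⟪h i j, h j i⟫)

lemma two_mul_gaussScalarCurvature [LinearOrder ι] {h : ι → ι → W} (hh : ∀ i j, h i j = h j i) :
    2 * gaussScalarCurvature h = ‖∑ i, h i i‖ ^ 2 - ∑ i, ∑ j, ‖h i j‖ ^ 2 := by
  have symm (i j : ι) :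
      ⟪h i i, h j j⟫ - ⟪h i j, h j i⟫ = ⟪h j j, h i i⟫ - ⟪h j i, h i j⟫ := by
    rw [real_inner_comm (h i i), real_inner_comm (h i j)]
  have double_sum := two_nsmul_sum_sum_lt_of_symm symm fun i ↦ sub_self _
  rw [nsmul_eq_mul, Nat.cast_ofNat] at double_sum
  have inner_trace : ∑ i, ∑ j, ⟪h i i, h j j⟫ = ‖∑ i, h i i‖ ^ 2 := by
    simp only [← real_inner_self_eq_norm_sq, sum_inner, inner_sum]
    exact sum_comm
  rw [gaussScalarCurvature, double_sum]
  simp only [sum_sub_distrib, inner_trace, ← hh, real_inner_self_eq_norm_sq]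

lemma casorati_gap_eq [LinearOrder ι] [Nontrivial ι] {h : ι → ι → W}
    (hh : ∀ i j, h i j = h j i) (k : ι) {n r : ℝ} (hn : n = Fintype.card ι) (hr : 0 < r) :
    r * casoratiCurvature h univ + casoratiCoeff n r * casoratiCurvature h {k}ᶜ -
        2 * gaussScalarCurvature h =
      (n - 1) * (n + r) / r * ∑ p ∈ ({k}ᶜ : Finset ι).offDiag, ‖h p.1 p.2‖ ^ 2 +
      2 * (1 + r / n) * ∑ i ∈ {k}ᶜ, ‖h i k‖ ^ 2 +
      ((n - 1) * (n + r) / r * ∑ i ∈ {k}ᶜ, ‖h i i - (r / (n * (n - 1))) • h k k‖ ^ 2 -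
        ‖∑ i ∈ {k}ᶜ, (h i i - (r / (n * (n - 1))) • h k k)‖ ^ 2) := by
  have one_lt_n : 1 < n := hn ▸ Nat.one_lt_cast.mpr Fintype.one_lt_card
  have n_sub_one_pos : 0 < n - 1 := sub_pos.mpr one_lt_n
  have card_compl : (#({k}ᶜ : Finset ι) : ℝ) = n - 1 := by
    rw [cast_card_compl_singleton, hn]
  have square_coeff :
      r / (n * (n - 1)) * ((n - 1) * (n + r) / r - #({k}ᶜ : Finset ι)) = 1 := by
    rw [card_compl]
    field_simp
    ring
  rw [← mul_sum_sq_norm_sub_sq_norm_sum_add {k}ᶜ square_coeff, two_mul_gaussScalarCurvature hh,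
    casoratiCurvature, casoratiCurvature, casoratiCoeff, card_univ, ← hn, card_compl,
    sum_sum_eq_sum_sum_compl_add_of_symm (fun i j ↦ by rw [hh]) k,
    sum_sum_eq_sum_diag_add_sum_offDiag {k}ᶜ, Fintype.sum_eq_add_sum_compl k (fun i ↦ h i i),
    add_comm (h k k), nsmul_eq_mul]
  push_cast
  field_simp
  ring

theorem algebraic_casorati_equality_iff_general [LinearOrder ι] [Nontrivial ι] {h : ι → ι → W}
    (hh : ∀ i j, h i j = h j i) (k : ι) {n r : ℝ} (hn : n = Fintype.card ι) (hr : 0 < r) :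
    2 * gaussScalarCurvature h =
        r * casoratiCurvature h univ + casoratiCoeff n r * casoratiCurvature h {k}ᶜ ↔
      (∀ i j, i ≠ j → h i j = 0) ∧ ∀ i ≠ k, h i i = (r / (n * (n - 1))) • h k k := by
  have one_lt_n : 1 < n := hn ▸ Nat.one_lt_cast.mpr Fintype.one_lt_card
  have n_sub_one_pos : 0 < n - 1 := sub_pos.mpr one_lt_n
  have block_coeff_pos : 0 < (n - 1) * (n + r) / r := by positivity
  have column_coeff_pos : 0 < 2 * (1 + r / n) := by positivity
  have card_lt_block_coeff : (#({k}ᶜ : Finset ι) : ℝ) < (n - 1) * (n + r) / r := by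
    rw [cast_card_compl_singleton, ← hn, lt_div_iff₀ hr]
    exact mul_lt_mul_of_pos_left (by linarith) n_sub_one_pos
  have diag_nonneg := sub_nonneg.mpr <| sq_norm_sum_le_mul_sum_sq_norm card_lt_block_coeff.le
    fun i ↦ h i i - (r / (n * (n - 1))) • h k k
  rw [eq_comm, ← sub_eq_zero, casorati_gap_eq hh k hn hr,
    add_eq_zero_iff_of_nonneg (by positivity) diag_nonneg,
    add_eq_zero_iff_of_nonneg (by positivity) (by positivity),
    mul_eq_zero_iff_left block_coeff_pos.ne', mul_eq_zero_iff_left column_coeff_pos.ne',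
    sum_sq_norm_eq_zero_iff, sum_sq_norm_eq_zero_iff,
    offDiag_compl_singleton_eq_zero_iff_of_symm hh,
    mul_sum_sq_norm_sub_sq_norm_sum_eq_zero_iff card_lt_block_coeff]
  simp only [mem_compl, mem_singleton, sub_eq_zero, ne_eq]

end Casorati

/-- For `r > 0`, `r ≠ n(n−1)`, the equality
`2τ_T = r·C^{T,ζ} + a(r)·C^{T,ζ}(P_{n−1})` holds iff `ζ_{ij} = 0` for `i ≠ j` and
`ζ_{11} = ⋯ = ζ_{n−1,n−1} = (r/(n(n−1))) ζ_{nn}`. -/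
theorem algebraic_casorati_equality_iff
    {V W : Type*} [NormedAddCommGroup V] [InnerProductSpace ℝ V]
    [FiniteDimensional ℝ V] [NormedAddCommGroup W] [InnerProductSpace ℝ W]
    (n : ℕ) (hn : 2 ≤ n) (e : OrthonormalBasis (Fin n) ℝ V)
    (ζ : V →ₗ[ℝ] V →ₗ[ℝ] W) (hζ : ∀ X Y : V, ζ X Y = ζ Y X)
    (T : V → V → V → V → ℝ)
    (hT : ∀ X Y Z W' : V, T X Y Z W' = ⟪ζ X W', ζ Y Z⟫ - ⟪ζ X Z, ζ Y W'⟫)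
    (r : ℝ) (hr0 : 0 < r) (hr1 : r ≠ (n : ℝ) * ((n : ℝ) - 1))
    (τ C CP : ℝ)
    (hτ : τ = ∑ i : Fin n, ∑ j : Fin n,
        if i < j then T (e i) (e j) (e j) (e i) else 0)
    (hC : C = (1 / (n : ℝ)) * ∑ i : Fin n, ∑ j : Fin n, ‖ζ (e i) (e j)‖ ^ 2)
    (hCP : CP = (1 / ((n : ℝ) - 1)) *
        ∑ i ∈ Finset.univ.filter (fun i : Fin n => (i : ℕ) < n - 1),
          ∑ j ∈ Finset.univ.filter (fun j : Fin n => (j : ℕ) < n - 1),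
            ‖ζ (e i) (e j)‖ ^ 2) :
    (2 * τ = r * C +
        (((n : ℝ) - 1) * ((n : ℝ) + r) * ((n : ℝ) ^ 2 - (n : ℝ) - r) / ((n : ℝ) * r))
          * CP) ↔
    ((∀ i j : Fin n, i ≠ j → ζ (e i) (e j) = 0) ∧
      (∀ i : Fin n, (i : ℕ) < n - 1 →
        ζ (e i) (e i) = (r / ((n : ℝ) * ((n : ℝ) - 1))) •
          ζ (e ⟨n - 1, by omega⟩) (e ⟨n - 1, by omega⟩))) := by
  have : Nontrivial (Fin n) := Fin.nontrivial_iff_two_le.mpr hn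
  simpa only [hτ, hT, hC, hCP, fin_val_lt_sub_one_iff_ne (by omega : n - 1 < n), ← sum_filter,
    filter_ne', ← compl_singleton, gaussScalarCurvature, casoratiCurvature, casoratiCoeff,
    cast_card_compl_singleton, card_univ, Fintype.card_fin] using
    algebraic_casorati_equality_iff_general (fun i j ↦ hζ (e i) (e j)) ⟨n - 1, by omega⟩
      (congrArg Nat.cast (Fintype.card_fin n).symm) hr0
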